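/- Let m be a real number with 0 ≤ b − m/N ≤ 1 and m ≤ N b. Then |∑_{d=1}^{D} ((1 − a_d/N)^{N b − m} − exp(−a_d (b − m/N))) w_d| ≤ ∑_{d=1}^{D} (a_d/(N e)) w_d, where the powers are real powers with base 1 − a_d/N > 0. -/

import Mathlib

/-!
For `0 ≤ x ≤ 1 / 2` one has `exp (-(x + x ^ 2)) ≤ 1 - x ≤ exp (-x)`. Raising this to the power
`s ≥ 0` shows that `(1 - x) ^ s` lies below `exp (-(x * s))` by at most
`exp (-(x * s)) * (1 - exp (-(x ^ 2 * s))) ≤ x * (x * s * exp (-(x * s)))`, and `y * exp (-y)` is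
at most `exp (-1)`. The theorem applies this with `x = a d / N` and `s = N * b - m` to each summand.
-/

section RpowOneSub

variable {x s : ℝ}

lemma exp_neg_add_sq_le_one_sub (hx : x ≤ 1 / 2) : Real.exp (-(x + x ^ 2)) ≤ 1 - x := by
  suffices one_le_mul_exp : 1 ≤ (1 - x) * Real.exp (x + x ^ 2) by
    rwa [Real.exp_neg, inv_le_iff_one_le_mul₀ (Real.exp_pos _)]
  have one_sub_nonneg : 0 ≤ 1 - x := by linarith
  rcases le_total x 0 with x_nonpos | x_nonneg
  · calc
      1 ≤ 1 - x ^ 3 := by linarith [Odd.pow_nonpos (by decide : Odd 3) x_nonpos]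
      _ = (1 - x) * (x + x ^ 2 + 1) := by ring
      _ ≤ (1 - x) * Real.exp (x + x ^ 2) := by gcongr; exact Real.add_one_le_exp _
  · have cubic_nonneg : 0 ≤ 1 - x - x ^ 2 - x ^ 3 := by
      have sq_le : x ^ 2 ≤ (1 / 2) ^ 2 := by gcongr
      have cube_le : x ^ 3 ≤ (1 / 2) ^ 3 := by gcongr
      linarith
    calc
      1 ≤ 1 + x ^ 2 / 2 * (1 - x - x ^ 2 - x ^ 3) := le_add_of_nonneg_right (by positivity)
      _ = (1 - x) * (1 + (x + x ^ 2) + (x + x ^ 2) ^ 2 / 2) := by ring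
      _ ≤ (1 - x) * Real.exp (x + x ^ 2) := by
        gcongr
        exact Real.quadratic_le_exp_of_nonneg (by positivity)

lemma one_sub_rpow_le_exp_neg_mul (hx : x ≤ 1) (hs : 0 ≤ s) :
    (1 - x) ^ s ≤ Real.exp (-(x * s)) := by
  calc
    (1 - x) ^ s ≤ Real.exp (-x) ^ s :=
      Real.rpow_le_rpow (sub_nonneg.2 hx) (Real.one_sub_le_exp_neg x) hs
    _ = Real.exp (-(x * s)) := by rw [← Real.exp_mul, neg_mul]

lemma exp_neg_mul_mul_one_sub_le_one_sub_rpow (hx : x ≤ 1 / 2) (hs : 0 ≤ s) :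
    Real.exp (-(x * s)) * (1 - x ^ 2 * s) ≤ (1 - x) ^ s := by
  calc
    Real.exp (-(x * s)) * (1 - x ^ 2 * s) ≤ Real.exp (-(x * s)) * Real.exp (-(x ^ 2 * s)) := by
      gcongr
      exact Real.one_sub_le_exp_neg _
    _ = Real.exp (-(x + x ^ 2)) ^ s := by
      rw [← Real.exp_add, ← Real.exp_mul]
      ring_nf
    _ ≤ (1 - x) ^ s := Real.rpow_le_rpow (Real.exp_pos _).le (exp_neg_add_sq_le_one_sub hx) hs

lemma abs_one_sub_rpow_sub_exp_neg_mul_le (hx₀ : 0 ≤ x) (hx : x ≤ 1 / 2) (hs : 0 ≤ s) :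
    |(1 - x) ^ s - Real.exp (-(x * s))| ≤ x / Real.exp 1 := by
  rw [abs_sub_comm,
    abs_of_nonneg (sub_nonneg.2 (one_sub_rpow_le_exp_neg_mul (by linarith) hs))]
  calc
    Real.exp (-(x * s)) - (1 - x) ^ s
        ≤ Real.exp (-(x * s)) - Real.exp (-(x * s)) * (1 - x ^ 2 * s) := by
      gcongr
      exact exp_neg_mul_mul_one_sub_le_one_sub_rpow hx hs
    _ = x * (x * s * Real.exp (-(x * s))) := by ring
    _ ≤ x * Real.exp (-1) := by
      gcongr
      exact Real.mul_exp_neg_le_exp_neg_one _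
    _ = x / Real.exp 1 := by rw [Real.exp_neg, div_eq_mul_inv]

end RpowOneSub

theorem drift_fluid_limit_distance_general {ι : Type*} (t : Finset ι) {N b m : ℝ} (hN : 0 < N)
    (a w : ι → ℝ) (ha₀ : ∀ i ∈ t, 0 ≤ a i) (ha : ∀ i ∈ t, a i ≤ N / 2) (hm : m ≤ N * b) :
    |∑ i ∈ t, ((1 - a i / N) ^ (N * b - m) - Real.exp (-(a i) * (b - m / N))) * w i|
      ≤ ∑ i ∈ t, a i / (N * Real.exp 1) * |w i| := by
  refine (Finset.abs_sum_le_sum_abs _ _).trans (Finset.sum_le_sum fun i hi => ?_)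
  have ratio_nonneg : 0 ≤ a i / N := div_nonneg (ha₀ i hi) hN.le
  have ratio_le_half : a i / N ≤ 1 / 2 := by
    rw [div_le_iff₀ hN]
    linarith [ha i hi]
  have exponent_eq : -(a i) * (b - m / N) = -(a i / N * (N * b - m)) := by field_simp
  rw [abs_mul, exponent_eq, ← div_div]
  gcongr
  exact abs_one_sub_rpow_sub_exp_neg_mul_le ratio_nonneg ratio_le_half (sub_nonneg.2 hm)

/-- Bound on the distance between the exact expected one-step matching gain
and its exponential fluid limit (Lemma B.5). -/
theorem drift_fluid_limit_distance
    (D : ℕ) (hD : 1 ≤ D) (N b : ℝ) (hN : 0 < N) (hb : 0 < b)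
    (a w : Fin D → ℝ)
    (ha0 : ∀ d, 0 ≤ a d) (ha : ∀ d, a d ≤ N / 2) (hw : ∀ d, 0 ≤ w d)
    (m : ℝ) (hm0 : 0 ≤ b - m / N) (hm1 : b - m / N ≤ 1) (hmb : m ≤ N * b) :
    |∑ d, ((1 - a d / N) ^ (N * b - m) - Real.exp (-(a d) * (b - m / N))) * w d|
      ≤ ∑ d, a d / (N * Real.exp 1) * w d := by
  simpa only [abs_of_nonneg (hw _)] using drift_fluid_limit_distance_general Finset.univ hN a w
    (fun d _ => ha0 d) (fun d _ => ha d) hmb
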